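/- arXiv:1106.4346 — 4 statements merged into one kernel-verified Lean document; each statement's English description precedes it below -/
import Mathlib

section
/- Let σ be a communication schedule on n ≥ 1 nodes that is SVSC on the interval [0, b], and let K be the flooding (Bench-Mark) knowledge sets generated by σ. Then K(b+1, i) = Fin n (the full node set) for every node i; consequently, for any family of initial vectors s : Fin n → ℝ^d, every node i can form the exact average (1/n)·∑_{ℓ} s(ℓ) as the average of the initial vectors indexed by its knowledge set K(b+1, i). -/
/-- A communication path from node `j` to node `i` within the interval `[a, b]`:
a finite sequence of signals `σ (k q) = some (ℓ q, ℓ (q-1), s q)` for `q = 1, …, m`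
with `ℓ 0 = j`, `ℓ m = i`, `a ≤ s q ≤ k q ≤ b` for all `q`, and `s (q+1) > k q`. -/
def IsCommPath {n : ℕ} (σ : ℕ → Option (Fin n × Fin n × ℕ)) (j i : Fin n) (a b : ℕ) : Prop :=
  ∃ (m : ℕ) (node : ℕ → Fin n) (k s : ℕ → ℕ),
    0 < m ∧ node 0 = j ∧ node m = i ∧
    (∀ q, 1 ≤ q → q ≤ m → σ (k q) = some (node q, node (q - 1), s q)) ∧
    (∀ q, 1 ≤ q → q ≤ m → a ≤ s q ∧ s q ≤ k q ∧ k q ≤ b) ∧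
    (∀ q, 1 ≤ q → q < m → k q < s (q + 1))

/-- The schedule is singly V-strongly connected (SVSC) on `[a, b]`. -/
def IsSVSC {n : ℕ} (σ : ℕ → Option (Fin n × Fin n × ℕ)) (a b : ℕ) : Prop :=
  ∀ i j : Fin n, i ≠ j → IsCommPath σ j i a b

/-!
What a node knows never shrinks, and each signal carries everything its sender knew at the sending
time. Along a communication path every node sends its signal only after having received the
previous one, so the initial knowledge of the first node travels all the way to the last.
-/

section Propagation

variable {ι X : Type*} [Preorder X]

/-- `Propagates σ K` says that the information states `K k i` (of node `i` at time `k`, ordered by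
informativeness) spread along the schedule `σ` at least as fast as flooding prescribes: states are
never forgotten, and a signal passes on the whole state its sender had at the sending time. -/
structure Propagates (σ : ℕ → Option (ι × ι × ℕ)) (K : ℕ → ι → X) : Prop where
  monotone (i : ι) : Monotone fun k ↦ K k i
  le_of_signal {k : ℕ} {i j : ι} {s : ℕ} (h : σ k = some (i, j, s)) : K s j ≤ K (k + 1) i

theorem Propagates.of_union_update {α : Type*} [DecidableEq α] {σ : ℕ → Option (ι × ι × ℕ)}
    {K : ℕ → ι → Finset α}
    (hsome : ∀ k i j s, σ k = some (i, j, s) →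
      K (k + 1) i = K k i ∪ K s j ∧ ∀ m, m ≠ i → K (k + 1) m = K k m)
    (hnone : ∀ k, σ k = none → ∀ m, K (k + 1) m = K k m) :
    Propagates σ K where
  monotone m := monotone_nat_of_le_succ fun k ↦ by
    rcases h : σ k with _ | ⟨i, j, s⟩
    · exact (hnone k h m).ge
    · obtain ⟨h_receiver, h_other⟩ := hsome k i j s h
      obtain rfl | hm := eq_or_ne m i
      · exact h_receiver ▸ Finset.subset_union_left
      · exact (h_other m hm).ge
  le_of_signal h := (hsome _ _ _ _ h).1 ▸ Finset.subset_union_right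

variable {n : ℕ} {σ : ℕ → Option (Fin n × Fin n × ℕ)} {K : ℕ → Fin n → X} {a b : ℕ}

theorem Propagates.le_of_isCommPath (hK : Propagates σ K) {i j : Fin n}
    (hpath : IsCommPath σ j i a b) : K a j ≤ K (b + 1) i := by
  obtain ⟨m, node, k, s, hm, rfl, rfl, hsignal, hbounds, hlt⟩ := hpath
  have reaches (q : ℕ) (hq : 1 ≤ q) : q ≤ m → K a (node 0) ≤ K (k q + 1) (node q) := by
    induction q, hq using Nat.le_induction with
    | base =>
      intro h1
      calc K a (node 0) ≤ K (s 1) (node 0) := hK.monotone _ (hbounds 1 le_rfl h1).1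
        _ ≤ K (k 1 + 1) (node 1) := hK.le_of_signal (hsignal 1 le_rfl h1)
    | succ q hq ih =>
      intro hqm
      calc K a (node 0) ≤ K (k q + 1) (node q) := ih (Nat.le_of_succ_le hqm)
        _ ≤ K (s (q + 1)) (node q) := hK.monotone _ (hlt q hq hqm)
        _ ≤ K (k (q + 1) + 1) (node (q + 1)) :=
          hK.le_of_signal (hsignal (q + 1) (Nat.le_add_left 1 q) hqm)
  have hkm : k m ≤ b := (hbounds m hm le_rfl).2.2
  exact (reaches m hm le_rfl).trans (hK.monotone _ (Nat.succ_le_succ hkm))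

theorem Propagates.le_of_isSVSC (hK : Propagates σ K) (hconn : IsSVSC σ a b) (hab : a ≤ b + 1)
    (i j : Fin n) : K a j ≤ K (b + 1) i := by
  obtain rfl | hij := eq_or_ne i j
  · exact hK.monotone i hab
  · exact hK.le_of_isCommPath (hconn i j hij)

end Propagation

theorem bm_flooding_achieves_average_consensus_general
    {n : ℕ} {σ : ℕ → Option (Fin n × Fin n × ℕ)} {a b : ℕ} (hconn : IsSVSC σ a b)
    (hab : a ≤ b + 1) {K : ℕ → Fin n → Finset (Fin n)} (hK : Propagates σ K)
    (hself : ∀ i, i ∈ K a i) (i : Fin n) :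
    K (b + 1) i = Finset.univ ∧
      ∀ {E : Type*} [AddCommMonoid E] [Module ℝ E] (x : Fin n → E),
        ((K (b + 1) i).card : ℝ)⁻¹ • ∑ ℓ ∈ K (b + 1) i, x ℓ = (n : ℝ)⁻¹ • ∑ ℓ : Fin n, x ℓ := by
  have hfull : K (b + 1) i = Finset.univ :=
    Finset.eq_univ_of_forall fun j ↦ hK.le_of_isSVSC hconn hab i j (hself j)
  refine ⟨hfull, fun x ↦ ?_⟩
  rw [hfull, Finset.card_fin]

/-- **Theorem 1 (BM sufficiency).** If the schedule is SVSC on `[0, b]` then the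
flooding (Bench-Mark) knowledge set of every node is full at time `b + 1`, and hence every
node can form the exact average of the initial vectors from its knowledge set. -/
theorem bm_flooding_achieves_average_consensus
    {n : ℕ} (hn : 1 ≤ n) (σ : ℕ → Option (Fin n × Fin n × ℕ))
    (hσ : ∀ k i j s, σ k = some (i, j, s) → s ≤ k)
    (b : ℕ) (hconn : IsSVSC σ 0 b)
    (K : ℕ → Fin n → Finset (Fin n))
    (hK0 : ∀ i, K 0 i = {i})
    (hKup : ∀ k i j s, σ k = some (i, j, s) →
      K (k + 1) i = K k i ∪ K s j ∧ ∀ m, m ≠ i → K (k + 1) m = K k m)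
    (hKnone : ∀ k, σ k = none → ∀ m, K (k + 1) m = K k m) :
    ∀ i : Fin n, K (b + 1) i = Finset.univ ∧
      ∀ (d : ℕ) (sInit : Fin n → EuclideanSpace ℝ (Fin d)),
        ((K (b + 1) i).card : ℝ)⁻¹ • ∑ ℓ ∈ K (b + 1) i, sInit ℓ
          = (n : ℝ)⁻¹ • ∑ ℓ : Fin n, sInit ℓ := by
  intro i
  obtain ⟨hfull, haverage⟩ := bm_flooding_achieves_average_consensus_general hconn
    (Nat.zero_le _) (.of_union_update hKup hKnone) (fun j ↦ by simp [hK0]) i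
  exact ⟨hfull, fun _ ↦ haverage⟩
end

section
/- Let n ≥ 2 and d ≥ 1, let i be a node and R ⊆ Fin n a set of nodes with i ∈ R and R ≠ Fin n. Suppose f : (Fin n → ℝ^d) → ℝ^d is any function that depends only on the coordinates in R, i.e. f(s) = f(s') whenever s(ℓ) = s'(ℓ) for all ℓ ∈ R. Then there exists an assignment of initial vectors s : Fin n → ℝ^d such that f(s) ≠ (1/n)·∑_{ℓ} s(ℓ). -/
/-! A map that ignores the coordinate `j` takes the same value at a family supported at `j` as at
`0`, whereas the average of the family whose only non-zero entry is `v`, at `j`, is a non-zero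
multiple of `v`. -/

theorem apply_update_eq_of_dependsOn {ι β : Type*} {α : ι → Type*} [DecidableEq ι]
    {f : (∀ ℓ, α ℓ) → β} {R : Set ι} (hf : DependsOn f R) {j : ι} (hj : j ∉ R)
    (s : ∀ ℓ, α ℓ) (v : α j) : f (Function.update s j v) = f s :=
  hf fun _ hℓ ↦ Function.update_of_ne (ne_of_mem_of_not_mem hℓ hj) v s

section WeightedSum

variable {ι K V : Type*} [Fintype ι] [AddCommMonoid V] [Nontrivial V]

theorem weight_eq_zero_of_dependsOn_sum_smul [Semiring K] [IsCancelMulZero K]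
    [Module K V] [Module.IsTorsionFree K V] {w : ι → K} {R : Set ι}
    (hw : DependsOn (fun s : ι → V ↦ ∑ ℓ, w ℓ • s ℓ) R) {j : ι} (hj : j ∉ R) : w j = 0 := by
  classical
  obtain ⟨v, hv⟩ := exists_ne (0 : V)
  have hwv : w j • v = 0 := calc
    w j • v = ∑ ℓ, w ℓ • (Pi.single j v : ι → V) ℓ := by simp [Pi.single_apply]
    _ = ∑ ℓ, w ℓ • (0 : ι → V) ℓ := apply_update_eq_of_dependsOn hw hj 0 v
    _ = 0 := by simp
  exact (smul_eq_zero_iff_left hv).mp hwv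

theorem no_average_consensus_from_proper_subset_general [DivisionSemiring K] [Module K V]
    (hcard : (Fintype.card ι : K) ≠ 0) {R : Set ι} (hR : R ≠ Set.univ)
    {f : (ι → V) → V} (hf : DependsOn f R) :
    ∃ s : ι → V, f s ≠ (Fintype.card ι : K)⁻¹ • ∑ ℓ, s ℓ := by
  by_contra! havg
  obtain ⟨j, hj⟩ := (Set.ne_univ_iff_exists_notMem R).mp hR
  have hsum : f = fun s ↦ ∑ ℓ, (Fintype.card ι : K)⁻¹ • s ℓ :=
    funext fun s ↦ (havg s).trans Finset.smul_sum
  rw [hsum] at hf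
  exact inv_ne_zero hcard
    (weight_eq_zero_of_dependsOn_sum_smul (w := fun _ ↦ (Fintype.card ι : K)⁻¹) hf hj)

end WeightedSum

/-- **Theorem 2 (necessity of SVSC).** If `f` computes node `i`'s final estimate from the
initial vectors and depends only on the coordinates in a proper subset `R` of the nodes
(with `i ∈ R`), then `f` cannot always output the average of all `n` initial vectors. -/
theorem no_average_consensus_from_proper_subset
    {n d : ℕ} (hn : 2 ≤ n) (hd : 1 ≤ d) (i : Fin n) (R : Finset (Fin n))
    (hiR : i ∈ R) (hR : R ≠ Finset.univ)
    (f : (Fin n → EuclideanSpace ℝ (Fin d)) → EuclideanSpace ℝ (Fin d))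
    (hf : ∀ s s' : Fin n → EuclideanSpace ℝ (Fin d),
      (∀ ℓ ∈ R, s ℓ = s' ℓ) → f s = f s') :
    ∃ s : Fin n → EuclideanSpace ℝ (Fin d),
      f s ≠ (n : ℝ)⁻¹ • ∑ ℓ : Fin n, s ℓ := by
  have : Nonempty (Fin d) := ⟨⟨0, hd⟩⟩
  have hcard : (Fintype.card (Fin n) : ℝ) ≠ 0 := by
    simpa using (by omega : n ≠ 0)
  simpa using no_average_consensus_from_proper_subset_general hcard
    (Finset.coe_eq_univ.not.mpr hR) fun s s' ↦ hf s s'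
end

section
/- Let σ be a communication schedule on n ≥ 1 nodes and let W be the OH (One-Hop) knowledge sets generated by σ. Then W(b+1, i) = Fin n holds for every node i if and only if for every node i at least one of the following holds: (C1i) for every j ≠ i there is a signal σ(k) = some (i, j, s) with s ≤ k ≤ b; or (C2i) there exist a node ℓ, a time a, and a communication path from ℓ to i within [a, b] whose first signal is sent at time a, such that for every j ≠ ℓ there is a signal σ(k') = some (ℓ, j, s') with k' < a. -/
/-- A communication path from node `j` to node `i` within the interval `[a, b]`,
whose first signal is sent at time `a₀`. -/
def IsCommPathFirstSentAt {n : ℕ} (σ : ℕ → Option (Fin n × Fin n × ℕ)) (j i : Fin n)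
    (a₀ a b : ℕ) : Prop :=
  ∃ (m : ℕ) (node : ℕ → Fin n) (k s : ℕ → ℕ),
    0 < m ∧ node 0 = j ∧ node m = i ∧ s 1 = a₀ ∧
    (∀ q, 1 ≤ q → q ≤ m → σ (k q) = some (node q, node (q - 1), s q)) ∧
    (∀ q, 1 ≤ q → q ≤ m → a ≤ s q ∧ s q ≤ k q ∧ k q ≤ b) ∧
    (∀ q, 1 ≤ q → q < m → k q < s (q + 1))

/-!
Node `i` knows everything at time `t` exactly when it has itself heard from every other node, or has
received a signal sent by a node that already knew everything. Unrolling the second alternative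
backwards in time, which terminates since signals are sent no later than they are received, gives a
communication path starting at a node that has heard from every other node.
-/

open Finset

variable {V : Type*}

/-- Node `i` has received a signal from node `j` at some step before `t`. -/
def HearsBefore (σ : ℕ → Option (V × V × ℕ)) (i j : V) (t : ℕ) : Prop :=
  ∃ k s, σ k = some (i, j, s) ∧ k < t

/-- `RelayedBefore σ ℓ a i t`: some communication path from `ℓ` to `i` has its first signal sent at
time `a` and its last signal received before `t`. Paths are built signal by signal, each signal
being sent strictly after the previous one was received. -/
inductive RelayedBefore (σ : ℕ → Option (V × V × ℕ)) (ℓ : V) (a : ℕ) : V → ℕ → Prop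
  | single {i : V} {k t : ℕ} (signal : σ k = some (i, ℓ, a)) (received : k < t) :
      RelayedBefore σ ℓ a i t
  | extend {i j : V} {k s t : ℕ} (path : RelayedBefore σ ℓ a j s)
      (signal : σ k = some (i, j, s)) (received : k < t) : RelayedBefore σ ℓ a i t

/-- The family `W` of knowledge sets is generated by the schedule `σ` under the One-Hop algorithm:
a signal passes on complete knowledge if its sender had it at the sending time, and otherwise just
the sender's own value. -/
structure IsOneHopKnowledge [Fintype V] [DecidableEq V] (σ : ℕ → Option (V × V × ℕ))
    (W : ℕ → V → Finset V) : Prop where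
  zero : ∀ i, W 0 i = {i}
  succ_of_some : ∀ k i j s, σ k = some (i, j, s) →
    (W (k + 1) i = if W s j = univ then univ else W k i ∪ {j}) ∧
      ∀ m, m ≠ i → W (k + 1) m = W k m
  succ_of_none : ∀ k, σ k = none → ∀ m, W (k + 1) m = W k m

theorem hearsBefore_succ_iff {σ : ℕ → Option (V × V × ℕ)}
    (hσ : ∀ k i j s, σ k = some (i, j, s) → s ≤ k) {i j : V} {b : ℕ} :
    HearsBefore σ i j (b + 1) ↔ ∃ k s, σ k = some (i, j, s) ∧ s ≤ k ∧ k ≤ b :=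
  exists₂_congr fun k s => and_congr_right fun signal => by
    simp only [hσ k i j s signal, true_and, Nat.lt_succ_iff]

theorem RelayedBefore.mono {σ : ℕ → Option (V × V × ℕ)} {ℓ i : V} {a t t' : ℕ}
    (h : RelayedBefore σ ℓ a i t) (ht : t ≤ t') : RelayedBefore σ ℓ a i t' := by
  cases h with
  | single signal received => exact .single signal (received.trans_le ht)
  | extend path signal received => exact .extend path signal (received.trans_le ht)

namespace IsCommPathFirstSentAt

variable {n : ℕ} {σ : ℕ → Option (Fin n × Fin n × ℕ)} {ℓ i j : Fin n} {a₀ a b c k s : ℕ}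

theorem mono (h : IsCommPathFirstSentAt σ ℓ i a₀ a b) (hbc : b ≤ c) :
    IsCommPathFirstSentAt σ ℓ i a₀ a c := by
  obtain ⟨m, node, k, s, hm, hfirst, hlast, hsent, hsignal, htime, hgap⟩ := h
  refine ⟨m, node, k, s, hm, hfirst, hlast, hsent, hsignal, fun q h1 hq => ?_, hgap⟩
  obtain ⟨has, hsk, hkb⟩ := htime q h1 hq
  exact ⟨has, hsk, hkb.trans hbc⟩

theorem single (signal : σ k = some (i, j, s)) (hsk : s ≤ k) :
    IsCommPathFirstSentAt σ j i s s k := by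
  refine ⟨1, fun q => if q = 0 then j else i, fun _ => k, fun _ => s, one_pos, rfl, rfl, rfl,
    fun q h1 hq => ?_, fun _ _ _ => ⟨le_rfl, hsk, le_rfl⟩, by omega⟩
  obtain rfl : q = 1 := le_antisymm hq h1
  exact signal

theorem extend (path : IsCommPathFirstSentAt σ ℓ j a₀ a c) (signal : σ k = some (i, j, s))
    (hcs : c < s) (hsk : s ≤ k) : IsCommPathFirstSentAt σ ℓ i a₀ a k := by
  obtain ⟨m, node, recv, sent, hm, hfirst, hlast, hsent, hsignal, htime, hgap⟩ := path
  refine ⟨m + 1, fun q => if q ≤ m then node q else i, fun q => if q ≤ m then recv q else k,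
    fun q => if q ≤ m then sent q else s, m.succ_pos, by simpa using hfirst, by simp,
    by simpa [Nat.one_le_iff_ne_zero, hm.ne'] using hsent, fun q h1 hq => ?_, fun q h1 hq => ?_,
    fun q h1 hq => ?_⟩
  · obtain hqm | rfl := Nat.le_succ_iff.mp hq
    · simpa [hqm, (q.sub_le 1).trans hqm] using hsignal q h1 hqm
    · simpa [hlast] using signal
  · obtain hqm | rfl := Nat.le_succ_iff.mp hq
    · have := htime q h1 hqm
      simp only [hqm, if_true]
      omega
    · have := htime m hm le_rfl
      simp only [Nat.not_succ_le_self, if_false]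
      omega
  · obtain hqm | rfl := (Nat.lt_succ_iff.mp hq).lt_or_eq
    · simpa [hqm.le, Nat.succ_le_iff.mpr hqm] using hgap q h1 hqm
    · simpa using (htime q h1 le_rfl).2.2.trans_lt hcs

theorem relayedBefore (h : IsCommPathFirstSentAt σ ℓ i a₀ a b) :
    RelayedBefore σ ℓ a₀ i (b + 1) := by
  obtain ⟨m, node, k, s, hm, rfl, rfl, rfl, hsignal, htime, hgap⟩ := h
  have relayed_upto : ∀ q, 1 ≤ q → q ≤ m →
      RelayedBefore σ (node 0) (s 1) (node q) (k q + 1) := by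
    intro q h1
    induction q, h1 using Nat.le_induction with
    | base => exact fun h1m => .single (hsignal 1 le_rfl h1m) (Nat.lt_succ_self _)
    | succ q h1 ih =>
      intro hqm
      have path : RelayedBefore σ (node 0) (s 1) (node q) (s (q + 1)) :=
        (ih (Nat.le_of_succ_le hqm)).mono (hgap q h1 hqm)
      exact path.extend (hsignal (q + 1) q.succ_pos hqm) (Nat.lt_succ_self _)
  exact (relayed_upto m hm le_rfl).mono (Nat.succ_le_succ (htime m hm le_rfl).2.2)

end IsCommPathFirstSentAt

theorem RelayedBefore.exists_isCommPathFirstSentAt {n : ℕ}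
    {σ : ℕ → Option (Fin n × Fin n × ℕ)}
    (hσ : ∀ k i j s, σ k = some (i, j, s) → s ≤ k) {ℓ i : Fin n} {a t : ℕ}
    (h : RelayedBefore σ ℓ a i t) : ∃ c < t, IsCommPathFirstSentAt σ ℓ i a a c := by
  induction h with
  | single signal received => exact ⟨_, received, .single signal (hσ _ _ _ _ signal)⟩
  | extend _ signal received ih =>
    obtain ⟨c, hcs, path⟩ := ih
    exact ⟨_, received, path.extend signal hcs (hσ _ _ _ _ signal)⟩

theorem isCommPathFirstSentAt_iff_relayedBefore {n : ℕ}
    {σ : ℕ → Option (Fin n × Fin n × ℕ)}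
    (hσ : ∀ k i j s, σ k = some (i, j, s) → s ≤ k) {ℓ i : Fin n} {a b : ℕ} :
    IsCommPathFirstSentAt σ ℓ i a a b ↔ RelayedBefore σ ℓ a i (b + 1) := by
  refine ⟨IsCommPathFirstSentAt.relayedBefore, fun h => ?_⟩
  obtain ⟨c, hc, path⟩ := h.exists_isCommPathFirstSentAt hσ
  exact path.mono (Nat.lt_succ_iff.mp hc)

namespace IsOneHopKnowledge

variable [Fintype V] [DecidableEq V] {σ : ℕ → Option (V × V × ℕ)} {W : ℕ → V → Finset V}

theorem mem_succ_iff (hW : IsOneHopKnowledge σ W) {t : ℕ} {i x : V} :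
    x ∈ W (t + 1) i ↔
      x ∈ W t i ∨ ∃ j s, σ t = some (i, j, s) ∧ (x = j ∨ W s j = univ) := by
  rcases hsignal : σ t with _ | ⟨i', j, s⟩
  · simp [hW.succ_of_none t hsignal]
  · obtain ⟨hreceiver, hother⟩ := hW.succ_of_some t i' j s hsignal
    obtain rfl | hi := eq_or_ne i i'
    · by_cases hfull : W s j = univ <;> simp [hreceiver, hfull, or_comm]
    · simp [hother i hi, hi.symm]

theorem mem_iff (hW : IsOneHopKnowledge σ W) {t : ℕ} {i x : V} :
    x ∈ W t i ↔
      x = i ∨ ∃ k < t, ∃ j s, σ k = some (i, j, s) ∧ (x = j ∨ W s j = univ) := by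
  induction t with
  | zero => simp [hW.zero]
  | succ t ih => rw [hW.mem_succ_iff, ih, Nat.exists_lt_succ_right, or_assoc]

theorem eq_univ_iff (hW : IsOneHopKnowledge σ W) {t : ℕ} {i : V} :
    W t i = univ ↔ (∀ j, j ≠ i → HearsBefore σ i j t) ∨
      ∃ k < t, ∃ j s, σ k = some (i, j, s) ∧ W s j = univ := by
  simp only [eq_univ_iff_forall (s := W t i), hW.mem_iff]
  constructor
  · intro hmem
    refine or_iff_not_imp_right.mpr fun hnone j hji => ?_
    obtain ⟨k, hk, j', s, signal, rfl | hfull⟩ := (hmem j).resolve_left hji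
    · exact ⟨k, s, signal, hk⟩
    · exact absurd ⟨k, hk, j', s, signal, hfull⟩ hnone
  · rintro (hheard | ⟨k, hk, j, s, signal, hfull⟩) x
    · refine or_iff_not_imp_left.mpr fun hxi => ?_
      obtain ⟨k, s, signal, hk⟩ := hheard x hxi
      exact ⟨k, hk, x, s, signal, .inl rfl⟩
    · exact .inr ⟨k, hk, j, s, signal, .inr hfull⟩

theorem eq_univ_of_relayedBefore (hW : IsOneHopKnowledge σ W) {ℓ i : V} {a t : ℕ}
    (hℓ : W a ℓ = univ) (h : RelayedBefore σ ℓ a i t) : W t i = univ := by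
  induction h with
  | single signal received => exact hW.eq_univ_iff.mpr (.inr ⟨_, received, _, _, signal, hℓ⟩)
  | extend _ signal received ih =>
    exact hW.eq_univ_iff.mpr (.inr ⟨_, received, _, _, signal, ih⟩)

theorem hearsBefore_or_relayedBefore_of_eq_univ (hW : IsOneHopKnowledge σ W)
    (hσ : ∀ k i j s, σ k = some (i, j, s) → s ≤ k) {t : ℕ} {i : V} (hfull : W t i = univ) :
    (∀ j, j ≠ i → HearsBefore σ i j t) ∨
      ∃ ℓ a, RelayedBefore σ ℓ a i t ∧ ∀ j, j ≠ ℓ → HearsBefore σ ℓ j a := by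
  induction t using Nat.strong_induction_on generalizing i with
  | h t ih =>
    refine (hW.eq_univ_iff.mp hfull).imp_right ?_
    rintro ⟨k, hk, j, s, signal, hsender⟩
    have hst : s < t := (hσ k i j s signal).trans_lt hk
    obtain hheard | ⟨ℓ, a, path, hheard⟩ := ih s hst hsender
    · exact ⟨j, s, .single signal hk, hheard⟩
    · exact ⟨ℓ, a, path.extend signal hk, hheard⟩

end IsOneHopKnowledge

theorem oh_average_consensus_iff_general [Fintype V] [DecidableEq V]
    {σ : ℕ → Option (V × V × ℕ)} {W : ℕ → V → Finset V} (hW : IsOneHopKnowledge σ W)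
    (hσ : ∀ k i j s, σ k = some (i, j, s) → s ≤ k) (t : ℕ) (i : V) :
    W t i = univ ↔ (∀ j, j ≠ i → HearsBefore σ i j t) ∨
      ∃ ℓ a, RelayedBefore σ ℓ a i t ∧ ∀ j, j ≠ ℓ → HearsBefore σ ℓ j a := by
  refine ⟨hW.hearsBefore_or_relayedBefore_of_eq_univ hσ, ?_⟩
  rintro (hheard | ⟨ℓ, a, path, hheard⟩)
  · exact hW.eq_univ_iff.mpr (.inl hheard)
  · exact hW.eq_univ_of_relayedBefore (hW.eq_univ_iff.mpr (.inl hheard)) path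

/-- **Theorem 4 (OH necessary and sufficient conditions).** Under the OH (One-Hop)
algorithm, every node obtains average-consensus by time `b + 1` if and only if every
node `i` satisfies condition (C1i) or condition (C2i). -/
theorem oh_average_consensus_iff
    {n : ℕ} (hn : 1 ≤ n) (σ : ℕ → Option (Fin n × Fin n × ℕ))
    (hσ : ∀ k i j s, σ k = some (i, j, s) → s ≤ k)
    (b : ℕ)
    (W : ℕ → Fin n → Finset (Fin n))
    (hW0 : ∀ i, W 0 i = {i})
    (hWup : ∀ k i j s, σ k = some (i, j, s) →
      (W (k + 1) i = if W s j = Finset.univ then Finset.univ else W k i ∪ {j}) ∧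
      ∀ m, m ≠ i → W (k + 1) m = W k m)
    (hWnone : ∀ k, σ k = none → ∀ m, W (k + 1) m = W k m) :
    (∀ i : Fin n, W (b + 1) i = Finset.univ) ↔
      (∀ i : Fin n,
        (∀ j : Fin n, j ≠ i → ∃ k s, σ k = some (i, j, s) ∧ s ≤ k ∧ k ≤ b) ∨
        (∃ (ℓ : Fin n) (a : ℕ), IsCommPathFirstSentAt σ ℓ i a a b ∧
          ∀ j : Fin n, j ≠ ℓ → ∃ k' s', σ k' = some (ℓ, j, s') ∧ k' < a)) := by
  simp_rw [← hearsBefore_succ_iff hσ, isCommPathFirstSentAt_iff_relayedBefore hσ]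
  exact forall_congr' (oh_average_consensus_iff_general ⟨hW0, hWup, hWnone⟩ hσ (b + 1))
end

section
/- Let σ be a communication schedule on n ≥ 1 nodes that is IVCC, and let A be the DDA (Discretized Distributed-Averaging) states in set form generated by σ. Then average-consensus is achieved in finite time: there exists K ∈ ℕ such that A(k, i) = Fin n for every node i and every k ≥ K. -/
/-- The schedule is singly V-completely connected (SVCC) on `[a, b]`: there are a node `î`
and a time `m` with `a ≤ m < b` such that every other node sends a signal received by `î`
within `[a, m]`, and `î` sends a signal received by every other node within `(m, b]`. -/
def IsSVCC {n : ℕ} (σ : ℕ → Option (Fin n × Fin n × ℕ)) (a b : ℕ) : Prop :=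
  ∃ (ihat : Fin n) (m : ℕ), a ≤ m ∧ m < b ∧
    (∀ j : Fin n, j ≠ ihat → ∃ k s, σ k = some (ihat, j, s) ∧ a ≤ s ∧ s ≤ k ∧ k ≤ m) ∧
    (∀ j : Fin n, j ≠ ihat → ∃ k' s', σ k' = some (j, ihat, s') ∧ m < s' ∧ s' ≤ k' ∧ k' ≤ b)

/-- The schedule is infinitely V-completely connected (IVCC). -/
def IsIVCC {n : ℕ} (σ : ℕ → Option (Fin n × Fin n × ℕ)) : Prop :=
  ∀ a : ℕ, ∃ T : ℕ, IsSVCC σ a (a + T)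

/-!
The sum of the cardinalities of the estimates strictly increases whenever some estimate changes, so
the states are eventually constant. In a constant regime, a signal from `j` to `i` can only be
ignored if `A i` has at least as many elements other than `i` as `A j` has. If `i` and `j` ignore
each other in this sense, then each belongs to the estimate of the other: were `j ∉ A i`, the two
inequalities would give `#(A i) ≤ #(A j) - 1` and `#(A j) - 1 ≤ #(A i) - 1`. Hence the estimate of
a node exchanging signals with all others is full, and a full estimate that is ignored forces the
receiver's estimate to be full as well.
-/

section DDA

open Finset Filter

theorem eventuallyConst_atTop_of_eq_or_lt {α : Type*} {f : ℕ → α} {φ : α → ℕ} {N : ℕ}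
    (hN : ∀ k, φ (f k) ≤ N) (hf : ∀ k, f (k + 1) = f k ∨ φ (f k) < φ (f (k + 1))) :
    EventuallyConst f atTop := by
  have hmono : Monotone (φ ∘ f) :=
    monotone_nat_of_le_succ fun k => (hf k).elim (fun h => (congrArg φ h).ge) le_of_lt
  obtain ⟨b, K, hK⟩ := converges_of_monotone_of_bounded hmono hN
  have hconst (k : ℕ) (hk : K ≤ k) : φ (f k) = φ (f (k + 1)) :=
    (hK k hk).trans (hK (k + 1) (Nat.le_succ_of_le hk)).symm
  exact eventuallyConst_atTop_nat.mpr
    ⟨K, fun k hk => (hf k).resolve_right (hconst k hk).not_lt⟩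

variable {V : Type*} [DecidableEq V]

theorem mem_of_card_erase_le_card_erase {P Q : Finset V} {i j : V} (hi : i ∈ P) (hj : j ∈ Q)
    (hQP : #(Q.erase i) ≤ #(P.erase i)) (hPQ : #(P.erase j) ≤ #(Q.erase j)) : j ∈ P := by
  by_contra hjP
  have hlt : #P < #Q :=
    calc #P = #(P.erase j) := by rw [erase_eq_of_notMem hjP]
      _ ≤ #(Q.erase j) := hPQ
      _ < #Q := card_erase_lt_of_mem hj
  have hle : #Q - 1 ≤ #P - 1 :=
    calc #Q - 1 ≤ #(Q.erase i) := pred_card_le_card_erase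
      _ ≤ #(P.erase i) := hQP
      _ = #P - 1 := card_erase_of_mem hi
  have hpos : 0 < #P := card_pos.mpr ⟨i, hi⟩
  omega

theorem eq_univ_of_card_erase_univ_le [Fintype V] {P : Finset V} {i : V} (hi : i ∈ P)
    (h : #(univ.erase i) ≤ #(P.erase i)) : P = univ := by
  have herase : P.erase i = univ.erase i :=
    eq_of_subset_of_card_le (erase_subset_erase i (subset_univ P)) h
  rw [← insert_erase hi, herase, insert_erase (mem_univ i)]

theorem eq_univ_of_forall_ne_card_erase_le [Fintype V] {B : V → Finset V} {c : V}
    (hB : ∀ i, i ∈ B i) (hin : ∀ j, j ≠ c → #((B j).erase c) ≤ #((B c).erase c))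
    (hout : ∀ j, j ≠ c → #((B c).erase j) ≤ #((B j).erase j)) (i : V) : B i = univ := by
  have hc : B c = univ := by
    refine eq_univ_iff_forall.mpr fun j => ?_
    rcases eq_or_ne j c with rfl | hj
    · exact hB j
    · exact mem_of_card_erase_le_card_erase (hB c) (hB j) (hin j hj) (hout j hj)
  rcases eq_or_ne i c with rfl | hi
  · exact hc
  · exact eq_univ_of_card_erase_univ_le (hB i) (hc ▸ hout i hi)

/-- The DDA update rule: the new estimate of node `i` when its estimate is `P` and it receives the
estimate `Q`. Estimates in `{0, 1/n}ⁿ` are encoded by their supports. -/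
def ddaUpdate (i : V) (P Q : Finset V) : Finset V :=
  if P.erase i ∩ Q.erase i = ∅ then P ∪ Q
  else if #(P.erase i) < #(Q.erase i) then Q ∪ {i}
  else P

theorem mem_ddaUpdate {i : V} {P : Finset V} (hi : i ∈ P) (Q : Finset V) :
    i ∈ ddaUpdate i P Q := by
  unfold ddaUpdate
  split_ifs <;> simp [hi]

theorem ddaUpdate_eq_or_card_lt {i : V} {P : Finset V} (hi : i ∈ P) (Q : Finset V) :
    ddaUpdate i P Q = P ∨ #P < #(ddaUpdate i P Q) := by
  unfold ddaUpdate
  split_ifs with _ hlt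
  · rcases (subset_union_left : P ⊆ P ∪ Q).eq_or_ssubset with heq | hss
    · exact .inl heq.symm
    · exact .inr (card_lt_card hss)
  · right
    calc #P = #(P.erase i) + 1 := (card_erase_add_one hi).symm
      _ < #(Q.erase i) + 1 := by gcongr
      _ = #((Q ∪ {i}).erase i) + 1 := by simp [union_singleton]
      _ = #(Q ∪ {i}) := card_erase_add_one (by simp)
  · exact .inl rfl

theorem card_erase_le_of_ddaUpdate_eq {i : V} {P Q : Finset V} (h : ddaUpdate i P Q = P) :
    #(Q.erase i) ≤ #(P.erase i) := by
  unfold ddaUpdate at h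
  split_ifs at h with _ hlt
  · exact card_le_card (erase_subset_erase i (union_eq_left.mp h))
  · exact card_le_card (erase_subset_erase i (h ▸ subset_union_left))
  · exact not_lt.mp hlt

/-- `A` is a sequence of DDA states driven by the schedule `σ`. The initial estimates are arbitrary
sets containing their own node; those of the DDA are the singletons. -/
structure IsDDATrajectory (σ : ℕ → Option (V × V × ℕ)) (A : ℕ → V → Finset V) : Prop where
  mem_zero : ∀ i, i ∈ A 0 i
  succ_of_some : ∀ k i j s, σ k = some (i, j, s) →
    A (k + 1) = Function.update (A k) i (ddaUpdate i (A k i) (A s j))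
  succ_of_none : ∀ k, σ k = none → A (k + 1) = A k

/-- Node `i` receives a signal that `j` sent at time `a` or later. -/
def ReceivesAfter {W : Type*} (σ : ℕ → Option (W × W × ℕ)) (a : ℕ) (i j : W) : Prop :=
  ∃ k s, σ k = some (i, j, s) ∧ a ≤ s ∧ s ≤ k

/-- After every time, some node exchanges signals in both directions with every other node. This
weakens IVCC: the signals to and from the hub may come in any order. -/
def HasRecurrentHub {W : Type*} (σ : ℕ → Option (W × W × ℕ)) : Prop :=
  ∀ a, ∃ c, ∀ j, j ≠ c → ReceivesAfter σ a c j ∧ ReceivesAfter σ a j c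

theorem IsIVCC.hasRecurrentHub {n : ℕ} {σ : ℕ → Option (Fin n × Fin n × ℕ)} (hσ : IsIVCC σ) :
    HasRecurrentHub σ := by
  intro a
  obtain ⟨T, c, m, ham, -, hin, hout⟩ := hσ a
  refine ⟨c, fun j hj => ⟨?_, ?_⟩⟩
  · obtain ⟨k, s, hk, has, hsk, -⟩ := hin j hj
    exact ⟨k, s, hk, has, hsk⟩
  · obtain ⟨k, s, hk, hms, hsk, -⟩ := hout j hj
    exact ⟨k, s, hk, ham.trans hms.le, hsk⟩

namespace IsDDATrajectory

variable {σ : ℕ → Option (V × V × ℕ)} {A : ℕ → V → Finset V}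

theorem mem (hA : IsDDATrajectory σ A) (k : ℕ) (i : V) : i ∈ A k i := by
  induction k with
  | zero => exact hA.mem_zero i
  | succ k ih =>
    rcases hk : σ k with _ | ⟨r, j, s⟩
    · rwa [hA.succ_of_none k hk]
    · rw [hA.succ_of_some k r j s hk]
      rcases eq_or_ne i r with rfl | hir
      · rw [Function.update_self]
        exact mem_ddaUpdate ih _
      · rwa [Function.update_of_ne hir]

theorem succ_eq_or_sum_card_lt [Fintype V] (hA : IsDDATrajectory σ A) (k : ℕ) :
    A (k + 1) = A k ∨ ∑ i, #(A k i) < ∑ i, #(A (k + 1) i) := by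
  rcases hk : σ k with _ | ⟨i, j, s⟩
  · exact .inl (hA.succ_of_none k hk)
  rw [hA.succ_of_some k i j s hk]
  rcases ddaUpdate_eq_or_card_lt (hA.mem k i) (A s j) with heq | hlt
  · left
    rw [heq, Function.update_eq_self]
  · right
    refine sum_lt_sum (fun m _ => ?_) ⟨i, mem_univ i, by rwa [Function.update_self]⟩
    rcases eq_or_ne m i with rfl | hm
    · rw [Function.update_self]
      exact hlt.le
    · rw [Function.update_of_ne hm]

theorem eventuallyConst [Finite V] (hA : IsDDATrajectory σ A) : EventuallyConst A atTop := by
  have := Fintype.ofFinite V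
  exact eventuallyConst_atTop_of_eq_or_lt (φ := fun B => ∑ i, #(B i))
    (fun k => sum_le_sum fun i _ => card_le_univ (A k i)) hA.succ_eq_or_sum_card_lt

theorem card_erase_le_of_receivesAfter (hA : IsDDATrajectory σ A) {K : ℕ}
    (hK : ∀ k ≥ K, A k = A K) {i j : V} (h : ReceivesAfter σ K i j) :
    #((A K j).erase i) ≤ #((A K i).erase i) := by
  obtain ⟨k, s, hk, hKs, hsk⟩ := h
  have hupd := hA.succ_of_some k i j s hk
  rw [hK (k + 1) (by omega), hK k (by omega), hK s hKs] at hupd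
  exact card_erase_le_of_ddaUpdate_eq (Function.update_eq_self_iff.mp hupd.symm)

end IsDDATrajectory

theorem dda_achieves_average_consensus_general [Fintype V] {σ : ℕ → Option (V × V × ℕ)}
    {A : ℕ → V → Finset V} (hA : IsDDATrajectory σ A) (hσ : HasRecurrentHub σ) :
    ∃ K : ℕ, ∀ k, K ≤ k → ∀ i, A k i = univ := by
  obtain ⟨K, hK⟩ := eventuallyConst_atTop.mp hA.eventuallyConst
  obtain ⟨c, hc⟩ := hσ K
  refine ⟨K, fun k hk i => hK k hk ▸ ?_⟩
  exact eq_univ_of_forall_ne_card_erase_le (hA.mem K)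
    (fun j hj => hA.card_erase_le_of_receivesAfter hK (hc j hj).1)
    (fun j hj => hA.card_erase_le_of_receivesAfter hK (hc j hj).2) i

end DDA

/-- **Theorem 5 (DDA sufficiency).** Under an IVCC communication schedule, the DDA
(Discretized Distributed-Averaging) states in set form reach the full node set in finite
time, i.e. average-consensus is achieved. -/
theorem dda_achieves_average_consensus
    {n : ℕ} (hn : 1 ≤ n) (σ : ℕ → Option (Fin n × Fin n × ℕ))
    (hσ : ∀ k i j s, σ k = some (i, j, s) → s ≤ k)
    (hconn : IsIVCC σ)
    (A : ℕ → Fin n → Finset (Fin n))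
    (hA0 : ∀ i, A 0 i = {i})
    (hAup : ∀ k i j s, σ k = some (i, j, s) →
      (A (k + 1) i =
        if ((A k i).erase i ∩ (A s j).erase i) = ∅ then A k i ∪ A s j
        else if ((A k i).erase i).card < ((A s j).erase i).card then A s j ∪ {i}
        else A k i) ∧
      ∀ m, m ≠ i → A (k + 1) m = A k m)
    (hAnone : ∀ k, σ k = none → ∀ m, A (k + 1) m = A k m) :
    ∃ K : ℕ, ∀ k, K ≤ k → ∀ i : Fin n, A k i = Finset.univ :=
  dda_achieves_average_consensus_general
    ⟨fun i => hA0 i ▸ Finset.mem_singleton_self i,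
      fun k i j s hk => Function.eq_update_iff.mpr (hAup k i j s hk),
      fun k hk => funext (hAnone k hk)⟩
    hconn.hasRecurrentHub
end
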